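/- Let M₀ and M₁ be nonnegative integrable random variables with the same distribution, and let Ŵ be a nonnegative integrable random variable, independent of the pair (M₀, M₁), with E(Ŵ) = 1/2. If Ŵ · max(M₀, M₁) has the same distribution as M₀, then min(M₀, M₁) = 0 almost surely. -/

import Mathlib

open MeasureTheory ProbabilityTheory

/-!
Taking expectations in the distributional equation gives `E M₀ = E W · E max(M₀, M₁)`, so
`E W ≤ 1/2` forces `2 E M₀ ≤ E max(M₀, M₁)`. As `min + max = M₀ + M₁`, the nonnegative variable
`min(M₀, M₁)` has expectation `2 E M₀ - E max(M₀, M₁) ≤ 0`, hence vanishes almost surely.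
-/

section MinMax

variable {Ω : Type*} [MeasurableSpace Ω] {μ : Measure Ω} {f g : Ω → ℝ}

theorem integral_min_add_integral_max (hf : Integrable f μ) (hg : Integrable g μ) :
    ∫ ω, min (f ω) (g ω) ∂μ + ∫ ω, max (f ω) (g ω) ∂μ = ∫ ω, f ω ∂μ + ∫ ω, g ω ∂μ :=
  calc
    ∫ ω, min (f ω) (g ω) ∂μ + ∫ ω, max (f ω) (g ω) ∂μ
      = ∫ ω, (min (f ω) (g ω) + max (f ω) (g ω)) ∂μ :=
        (integral_add (hf.inf hg) (hf.sup hg)).symm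
    _ = ∫ ω, (f ω + g ω) ∂μ := by simp only [min_add_max]
    _ = ∫ ω, f ω ∂μ + ∫ ω, g ω ∂μ := integral_add hf hg

theorem ae_min_eq_zero_of_integral_add_integral_le_integral_max
    (hf : Integrable f μ) (hg : Integrable g μ) (hf_nonneg : 0 ≤ᵐ[μ] f) (hg_nonneg : 0 ≤ᵐ[μ] g)
    (h : ∫ ω, f ω ∂μ + ∫ ω, g ω ∂μ ≤ ∫ ω, max (f ω) (g ω) ∂μ) :
    ∀ᵐ ω ∂μ, min (f ω) (g ω) = 0 := by
  have min_nonneg : 0 ≤ᵐ[μ] fun ω => min (f ω) (g ω) := by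
    filter_upwards [hf_nonneg, hg_nonneg] with ω hfω hgω using le_min hfω hgω
  have integral_min_eq_zero : ∫ ω, min (f ω) (g ω) ∂μ = 0 :=
    le_antisymm (by linarith [integral_min_add_integral_max hf hg])
      (integral_nonneg_of_ae min_nonneg)
  exact (integral_eq_zero_iff_of_nonneg_ae min_nonneg (hf.inf hg)).1 integral_min_eq_zero

end MinMax

theorem stmt_11_general {Ω : Type*} [MeasurableSpace Ω] {P : Measure Ω} {M₀ M₁ W : Ω → ℝ}
    (hM₀ : Integrable M₀ P) (hM₁ : Integrable M₁ P) (hW : Integrable W P)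
    (hM₀_nonneg : 0 ≤ᵐ[P] M₀) (hM₁_nonneg : 0 ≤ᵐ[P] M₁)
    (hindep : IndepFun W (fun ω => max (M₀ ω) (M₁ ω)) P)
    (hEM : ∫ ω, M₁ ω ∂P ≤ ∫ ω, M₀ ω ∂P) (hEW : ∫ ω, W ω ∂P ≤ 1 / 2)
    (hE : ∫ ω, M₀ ω ∂P ≤ ∫ ω, W ω * max (M₀ ω) (M₁ ω) ∂P) :
    ∀ᵐ ω ∂P, min (M₀ ω) (M₁ ω) = 0 := by
  have integral_max_nonneg : 0 ≤ ∫ ω, max (M₀ ω) (M₁ ω) ∂P :=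
    integral_nonneg_of_ae (hM₀_nonneg.mono fun ω hω => le_max_of_le_left hω)
  have integral_le_half_integral_max :
      ∫ ω, M₀ ω ∂P ≤ 1 / 2 * ∫ ω, max (M₀ ω) (M₁ ω) ∂P :=
    calc
      ∫ ω, M₀ ω ∂P ≤ ∫ ω, W ω * max (M₀ ω) (M₁ ω) ∂P := hE
      _ = (∫ ω, W ω ∂P) * ∫ ω, max (M₀ ω) (M₁ ω) ∂P :=
        hindep.integral_fun_mul_eq_mul_integral hW.aestronglyMeasurable
          (hM₀.sup hM₁).aestronglyMeasurable
      _ ≤ 1 / 2 * ∫ ω, max (M₀ ω) (M₁ ω) ∂P :=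
        mul_le_mul_of_nonneg_right hEW integral_max_nonneg
  exact ae_min_eq_zero_of_integral_add_integral_le_integral_max hM₀ hM₁ hM₀_nonneg hM₁_nonneg
    (by linarith)

/-- If `M₀, M₁ ≥ 0` are integrable and identically distributed, `Ŵ ≥ 0` is integrable,
independent of `(M₀, M₁)`, with `E(Ŵ) = 1/2`, and `Ŵ · max(M₀, M₁)` has the same law as
`M₀`, then `min(M₀, M₁) = 0` almost surely. -/
theorem stmt_11
    {Ω : Type*} [MeasurableSpace Ω] (P : Measure Ω) [IsProbabilityMeasure P]
    (M₀ M₁ W : Ω → ℝ)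
    (hM₀m : Measurable M₀) (hM₁m : Measurable M₁) (hWm : Measurable W)
    (hM₀0 : ∀ ω, 0 ≤ M₀ ω) (hM₁0 : ∀ ω, 0 ≤ M₁ ω) (hW0 : ∀ ω, 0 ≤ W ω)
    (hM₀i : Integrable M₀ P) (hM₁i : Integrable M₁ P) (hWi : Integrable W P)
    (hsame : P.map M₀ = P.map M₁)
    (hindep : IndepFun W (fun ω => (M₀ ω, M₁ ω)) P)
    (hEW : ∫ ω, W ω ∂P = 1 / 2)
    (hdist : P.map (fun ω => W ω * max (M₀ ω) (M₁ ω)) = P.map M₀) :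
    ∀ᵐ ω ∂P, min (M₀ ω) (M₁ ω) = 0 := by
  have hEM : ∫ ω, M₀ ω ∂P = ∫ ω, M₁ ω ∂P :=
    IdentDistrib.integral_eq ⟨hM₀m.aemeasurable, hM₁m.aemeasurable, hsame⟩
  have hE : ∫ ω, W ω * max (M₀ ω) (M₁ ω) ∂P = ∫ ω, M₀ ω ∂P :=
    IdentDistrib.integral_eq
      ⟨(hWm.mul (hM₀m.max hM₁m)).aemeasurable, hM₀m.aemeasurable, hdist⟩
  exact stmt_11_general hM₀i hM₁i hWi (ae_of_all P hM₀0) (ae_of_all P hM₁0)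
    (hindep.comp measurable_id (measurable_fst.max measurable_snd)) hEM.ge hEW.le hE.ge
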